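/- arXiv:1307.4974 — 9 statements merged into one kernel-verified Lean document; each statement's English description precedes it below -/
import Mathlib

section
/- Let K be a field and let f = (f_1,...,f_m) and g = (g_1,...,g_m) be m-tuples of polynomials of total degree at most 2 in K[x_1,...,x_n]. Then there exist A in GL_n(K) and b in K^n with g_i(x) = f_i(Ax + b) for all i if and only if there exists A' in GL_{n+1}(K) such that, writing x* = (x_0,x_1,...,x_n), one has x_0^2 = ((A'x*)_0)^2 and g_i*(x*) = f_i*(A'·x*) for all i, where f_i* and g_i* denote the degree-2 homogenizations of f_i and g_i with respect to the new variable x_0. -/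
open MvPolynomial

/-- The degree-2 homogenization of a polynomial `p` of total degree at most 2,
with respect to a new variable `x₀` (placed at index `0` of `Fin (n+1)`):
`p⋆(x₀,x₁,…,xₙ) = x₀² ⬝ p(x₁/x₀,…,xₙ/x₀)`. -/
noncomputable def homog2 {K : Type*} [Field K] {n : ℕ} (p : MvPolynomial (Fin n) K) :
    MvPolynomial (Fin (n + 1)) K :=
  ∑ mo ∈ p.support,
    MvPolynomial.monomial (Finsupp.cons (2 - mo.sum fun _ e => e) mo) (p.coeff mo)

noncomputable def dehom {K : Type*} [Field K] (n : ℕ) :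
    MvPolynomial (Fin (n + 1)) K →ₐ[K] MvPolynomial (Fin n) K :=
  aeval (Fin.cons 1 X : Fin (n + 1) → MvPolynomial (Fin n) K)

noncomputable def homL (K : Type*) [Field K] (n : ℕ) :
    MvPolynomial (Fin n) K →ₗ[K] MvPolynomial (Fin (n + 1)) K :=
  (basisMonomials (Fin n) K).constr K
    (fun mo => monomial (Finsupp.cons (2 - mo.sum fun _ e => e) mo) 1)

theorem homL_monomial {K : Type*} [Field K] {n : ℕ} (s : Fin n →₀ ℕ) (c : K) :
    homL K n (monomial s c) = monomial (Finsupp.cons (2 - s.sum fun _ e => e) s) c := by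
  have h : monomial s c = c • basisMonomials (Fin n) K s := by
    simp [smul_monomial]
  rw [h, map_smul, homL, Module.Basis.constr_basis, smul_monomial]
  simp

theorem homL_eq {K : Type*} [Field K] {n : ℕ} (p : MvPolynomial (Fin n) K) :
    homL K n p = homog2 p := by
  conv_lhs => rw [p.as_sum]
  rw [map_sum, homog2]
  exact Finset.sum_congr rfl fun s _ => homL_monomial _ _

theorem aeval_cons_monomial {K S : Type*} [Field K] [CommRing S] [Algebra K S] {n : ℕ}
    (h : Fin n → S) (s : Fin (n + 1) →₀ ℕ) (c : K) :
    aeval (Fin.cons 1 h : Fin (n + 1) → S) (monomial s c) = aeval h (monomial s.tail c) := by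
  rw [aeval_monomial, aeval_monomial, Finsupp.prod_fintype _ _ (by simp),
    Finsupp.prod_fintype _ _ (by simp), Fin.prod_univ_succ]
  simp [Finsupp.tail_apply]

theorem aeval_cons_homog2 {K S : Type*} [Field K] [CommRing S] [Algebra K S] {n : ℕ}
    (h : Fin n → S) (p : MvPolynomial (Fin n) K) :
    aeval (Fin.cons 1 h : Fin (n + 1) → S) (homog2 p) = aeval h p := by
  conv_rhs => rw [p.as_sum]
  rw [map_sum, homog2, map_sum]
  refine Finset.sum_congr rfl fun s _ => ?_
  rw [aeval_cons_monomial, Finsupp.tail_cons]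

theorem dehom_homog2 {K : Type*} [Field K] {n : ℕ} (p : MvPolynomial (Fin n) K) :
    dehom n (homog2 p) = p := by
  rw [dehom, aeval_cons_homog2, aeval_X_left_apply]

theorem dehom_monomial {K : Type*} [Field K] {n : ℕ} (s : Fin (n + 1) →₀ ℕ) (c : K) :
    dehom n (monomial s c) = monomial s.tail c := by
  rw [dehom, aeval_cons_monomial, aeval_X_left_apply]

theorem homL_dehom {K : Type*} [Field K] {n : ℕ} (P : MvPolynomial (Fin (n + 1)) K)
    (hP : P.IsHomogeneous 2) : homL K n (dehom n P) = P := by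
  conv_lhs => rw [P.as_sum]
  conv_rhs => rw [P.as_sum]
  rw [map_sum, map_sum]
  refine Finset.sum_congr rfl fun s hs => ?_
  rw [dehom_monomial, homL_monomial]
  congr 1
  have h : Finsupp.weight (fun _ => 1) s = 2 := hP (mem_support_iff.mp hs)
  rw [← Finsupp.degree_eq_weight_one, Finsupp.degree_eq_sum, Fin.sum_univ_succ] at h
  have e : (s.tail.sum fun _ e => e) = ∑ i : Fin n, s i.succ := by
    rw [Finsupp.sum_fintype _ _ (by simp)]
    rfl
  rw [e]
  have : 2 - ∑ i : Fin n, s i.succ = s 0 := by omega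
  rw [this, Finsupp.cons_tail]

theorem homog2_isHomogeneous {K : Type*} [Field K] {n : ℕ} (p : MvPolynomial (Fin n) K)
    (hp : p.totalDegree ≤ 2) : (homog2 p).IsHomogeneous 2 := by
  refine IsHomogeneous.sum _ _ _ fun s hs => ?_
  apply isHomogeneous_monomial
  have h := (le_totalDegree hs).trans hp
  rw [Finsupp.degree_eq_sum, Fin.sum_univ_succ]
  have e : (s.sum fun _ e => e) = ∑ i : Fin n, s i := Finsupp.sum_fintype _ _ (by simp)
  simp only [Finsupp.cons_zero, Finsupp.cons_succ]
  omega

theorem lin_isHomogeneous {K : Type*} [Field K] {n : ℕ} (a : Fin n → K) :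
    (∑ k, C (a k) * X k : MvPolynomial (Fin n) K).IsHomogeneous 1 := by
  refine IsHomogeneous.sum _ _ _ fun s hs => ?_
  exact isHomogeneous_C_mul_X _ _

theorem aeval_smul_homog {K S σ : Type*} [Field K] [CommRing S] [Algebra K S]
    (e : K) (v : σ → S) (P : MvPolynomial σ K) (hP : P.IsHomogeneous 2) :
    aeval (fun j => e • v j) P = e ^ 2 • aeval v P := by
  conv_lhs => rw [P.as_sum]
  conv_rhs => rw [P.as_sum]
  rw [map_sum, map_sum, Finset.smul_sum]
  refine Finset.sum_congr rfl fun s hs => ?_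
  have h : Finsupp.weight (fun _ => 1) s = 2 := hP (mem_support_iff.mp hs)
  rw [← Finsupp.degree_eq_weight_one, Finsupp.degree_apply] at h
  rw [aeval_monomial, aeval_monomial, Finsupp.prod, Finsupp.prod]
  simp only [smul_pow]
  rw [Finset.prod_smul, Finset.prod_pow_eq_pow_sum, h, mul_smul_comm]

theorem det_row {K : Type*} [Field K] {n : ℕ} (A : Matrix (Fin (n + 1)) (Fin (n + 1)) K)
    (h : ∀ k : Fin n, A 0 k.succ = 0) :
    A.det = A 0 0 * (A.submatrix Fin.succ Fin.succ).det := by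
  rw [Matrix.det_succ_row_zero, Fin.sum_univ_succ]
  simp [h]

theorem dehom_lin {K : Type*} [Field K] {n : ℕ} (a : Fin (n + 1) → K) :
    dehom n (∑ k, C (a k) * X k) = (∑ k : Fin n, C (a k.succ) * X k) + C (a 0) := by
  rw [Fin.sum_univ_succ, map_add, map_sum, add_comm]
  simp [dehom, algHom_C, algebraMap_eq]

theorem dehom_aeval {K : Type*} [Field K] {n : ℕ} (A : Matrix (Fin (n + 1)) (Fin (n + 1)) K)
    (P : MvPolynomial (Fin (n + 1)) K) :
    dehom n (aeval (fun j => ∑ k, C (A j k) * X k) P) =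
      aeval (fun j => (∑ k : Fin n, C (A j k.succ) * X k) + C (A j 0)) P := by
  rw [← AlgHom.comp_apply, comp_aeval]
  simp only [dehom_lin]

/-- Affine quadratic IP1S reduces to linear homogeneous quadratic IP1S by adjoining
the polynomial `x₀²` to both systems. -/
theorem affine_IP1S_iff_homogeneous_IP1S {K : Type*} [Field K] {n m : ℕ}
    (f g : Fin m → MvPolynomial (Fin n) K)
    (hf : ∀ i, (f i).totalDegree ≤ 2) (hg : ∀ i, (g i).totalDegree ≤ 2) :
    (∃ (A : Matrix (Fin n) (Fin n) K) (b : Fin n → K), IsUnit A ∧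
        ∀ i, g i = aeval (fun j => (∑ k, C (A j k) * X k) + C (b j)) (f i)) ↔
    (∃ A' : Matrix (Fin (n + 1)) (Fin (n + 1)) K, IsUnit A' ∧
        (X 0 : MvPolynomial (Fin (n + 1)) K) ^ 2 =
          aeval (fun j => ∑ k, C (A' j k) * X k)
            ((X 0 : MvPolynomial (Fin (n + 1)) K) ^ 2) ∧
        ∀ i, homog2 (g i) = aeval (fun j => ∑ k, C (A' j k) * X k) (homog2 (f i))) := by
  constructor
  · rintro ⟨A, b, hA, H⟩
    let A' : Matrix (Fin (n + 1)) (Fin (n + 1)) K :=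
      Matrix.of (Fin.cons (Fin.cons 1 0) (fun j => Fin.cons (b j) (A j)))
    have h00 : A' 0 0 = 1 := rfl
    have h0 : ∀ k : Fin n, A' 0 k.succ = 0 := fun _ => rfl
    have hs0 : ∀ k : Fin n, A' k.succ 0 = b k := fun _ => rfl
    have hss : ∀ j k : Fin n, A' j.succ k.succ = A j k := fun _ _ => rfl
    refine ⟨A', ?_, ?_, fun i => ?_⟩
    · rw [Matrix.isUnit_iff_isUnit_det] at hA ⊢
      have : A'.submatrix Fin.succ Fin.succ = A := rfl
      rw [det_row A' h0, h00, one_mul, this]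
      exact hA
    · rw [map_pow, aeval_X, Fin.sum_univ_succ]
      simp [h00, h0]
    · have hh : (aeval (fun j => ∑ k, C (A' j k) * X k) (homog2 (f i)) :
          MvPolynomial (Fin (n + 1)) K).IsHomogeneous 2 := by
        have := (homog2_isHomogeneous (f i) (hf i)).aeval
          (fun j => (∑ k, C (A' j k) * X k : MvPolynomial (Fin (n + 1)) K))
          (fun j => lin_isHomogeneous (A' j))
        simpa using this
      rw [← homL_dehom _ hh, ← homL_eq, dehom_aeval, H i, ← aeval_cons_homog2]
      congr 3
      funext j
      refine Fin.cases ?_ (fun j => ?_) j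
      · simp [h00, h0]
      · simp [hs0, hss]
  · rintro ⟨A', hA', h2, H⟩
    rw [map_pow, aeval_X] at h2
    obtain ⟨e, he, hL⟩ : ∃ e : K, e ^ 2 = 1 ∧
        (∑ k, C (A' 0 k) * X k : MvPolynomial (Fin (n + 1)) K) = C e * X 0 := by
      rcases sq_eq_sq_iff_eq_or_eq_neg.mp h2 with h | h
      · exact ⟨1, by simp, by simp [← h]⟩
      · exact ⟨-1, by simp, by simp [h]⟩
    have hc : ∀ k, A' 0 k = if k = 0 then e else 0 := by
      intro k
      have := congrArg (coeff (Finsupp.single k 1)) hL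
      simpa [coeff_sum, coeff_C_mul, coeff_X, Finsupp.single_left_inj, eq_comm]
        using this
    have h00 : A' 0 0 = e := by simp [hc]
    have h0 : ∀ k : Fin n, A' 0 k.succ = 0 := fun k => by simp [hc]
    have hee : e * e = 1 := by rw [← he]; ring
    have he0 : e ≠ 0 := by rintro rfl; simp at he
    refine ⟨e • A'.submatrix Fin.succ Fin.succ, fun j => e * A' j.succ 0, ?_, fun i => ?_⟩
    · rw [Matrix.isUnit_iff_isUnit_det] at hA' ⊢
      rw [det_row A' h0, h00] at hA'
      rw [Matrix.det_smul]
      exact ((isUnit_iff_ne_zero.mpr he0).pow _).mul (isUnit_of_mul_isUnit_right hA')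
    · have := congrArg (dehom n) (H i)
      rw [dehom_homog2, dehom_aeval] at this
      rw [this, ← aeval_cons_homog2 _ (f i), ← one_smul K (aeval (Fin.cons _ _) _), ← he,
        ← aeval_smul_homog _ _ _ (homog2_isHomogeneous _ (hf i))]
      congr 2
      funext j
      refine Fin.cases ?_ (fun j => ?_) j
      · simp [h00, h0, smul_eq_C_mul]
      · simp only [Fin.cons_succ, smul_eq_C_mul, Matrix.smul_apply, Matrix.submatrix_apply,
          smul_eq_mul, C_mul, mul_add, Finset.mul_sum, ← mul_assoc]
        simp only [← C_mul, hee, one_mul]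
end

section
/- Let K be a field (with char K ≠ 2) and let f = (f_1,...,f_m) and g = (g_1,...,g_m) be m-tuples of quadratic polynomials in K[x_1,...,x_n]. If f ~ g (i.e. there exists A in GL_n(K) with g(x) = f(A·x)), then f and g have the same number s of essential variables. Moreover, if f = f̃(ℓ_1,...,ℓ_s) and g = g̃(ℓ'_1,...,ℓ'_s) where ℓ_1,...,ℓ_s (resp. ℓ'_1,...,ℓ'_s) are linear forms in x_1,...,x_n of rank s and f̃, g̃ are m-tuples of polynomials in K[y_1,...,y_s], then f ~ g if and only if f̃ ~ g̃ (i.e. there exists à in GL_s(K) with g̃(y) = f̃(Ã·y)). -/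
open MvPolynomial

/-- Two `m`-tuples of polynomials in `n` variables are equivalent if there is an
invertible matrix `A` with `g(x) = f(A·x)`. -/
def IsLinEquiv {K : Type*} [Field K] {n m : ℕ}
    (f g : Fin m → MvPolynomial (Fin n) K) : Prop :=
  ∃ A : Matrix (Fin n) (Fin n) K, IsUnit A ∧
    ∀ i, g i = aeval (fun j => ∑ k, C (A j k) * X k) (f i)

/-- The number of essential variables of an `m`-tuple `f` of polynomials in `n`
variables: the smallest `s` such that `f = f̃(ℓ₁,…,ℓ_s)` for linear forms
`ℓ₁,…,ℓ_s` of rank `s` and `f̃` an `m`-tuple of polynomials in `s` variables. -/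
noncomputable def essNum {K : Type*} [Field K] {n m : ℕ}
    (f : Fin m → MvPolynomial (Fin n) K) : ℕ :=
  sInf {s | ∃ (L : Matrix (Fin s) (Fin n) K) (ft : Fin m → MvPolynomial (Fin s) K),
    L.rank = s ∧ ∀ i, f i = aeval (fun j => ∑ k, C (L j k) * X k) (ft i)}

theorem sub_comp_aux {K : Type*} [Field K] {a b c : ℕ}
    (M : Matrix (Fin a) (Fin b) K) (N : Matrix (Fin b) (Fin c) K)
    (p : MvPolynomial (Fin a) K) :
    aeval (fun j => ∑ k, C (N j k) * X k)
      (aeval (fun j => ∑ k, C (M j k) * (X k : MvPolynomial (Fin b) K)) p) =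
    aeval (fun j => ∑ k, C ((M * N) j k) * (X k : MvPolynomial (Fin c) K)) p := by
  rw [← AlgHom.comp_apply]
  congr 1
  ext1 j
  simp only [AlgHom.comp_apply, aeval_X, map_sum, map_mul, Matrix.mul_apply]
  simp only [algHom_C, algebraMap_eq, Finset.mul_sum, Finset.sum_mul]
  rw [Finset.sum_comm]
  simp only [mul_assoc]

theorem sub_one_aux {K : Type*} [Field K] {a : ℕ} (p : MvPolynomial (Fin a) K) :
    aeval (fun j => ∑ k, C ((1 : Matrix (Fin a) (Fin a) K) j k) *
      (X k : MvPolynomial (Fin a) K)) p = p := by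
  have : (fun j => ∑ k, C ((1 : Matrix (Fin a) (Fin a) K) j k) *
      (X k : MvPolynomial (Fin a) K)) = X := by
    funext j
    simp [Matrix.one_apply, apply_ite C, ite_mul]
  rw [this, aeval_X_left_apply]

theorem li_rows_aux {K : Type*} [Field K] {a b : ℕ} (M : Matrix (Fin a) (Fin b) K)
    (h : M.rank = a) : LinearIndependent K M.row := by
  rw [linearIndependent_iff_card_eq_finrank_span, Set.finrank, ← M.rank_eq_finrank_span_row, h,
    Fintype.card_fin]

theorem rinv_aux {K : Type*} [Field K] {a b : ℕ} (M : Matrix (Fin a) (Fin b) K)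
    (h : M.rank = a) : ∃ R : Matrix (Fin b) (Fin a) K, M * R = 1 := by
  rw [← Matrix.mulVec_surjective_iff_exists_right_inverse]
  have : LinearMap.range M.mulVecLin = ⊤ := by
    apply Submodule.eq_top_of_finrank_eq
    rw [← Matrix.rank, h]; simp
  exact LinearMap.range_eq_top.1 this

theorem factor_aux {K : Type*} [Field K] {a b : ℕ} (N : Matrix (Fin a) (Fin b) K) :
    ∃ (U : Matrix (Fin a) (Fin N.rank) K) (V : Matrix (Fin N.rank) (Fin b) K),
      V.rank = N.rank ∧ N = U * V := by
  have hr := N.rank_eq_finrank_span_row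
  let W := Submodule.span K (Set.range N.row)
  let e : Module.Basis (Fin N.rank) K W := Module.finBasisOfFinrankEq K W hr.symm
  let V : Matrix (Fin N.rank) (Fin b) K := Matrix.of fun j => (e j : Fin b → K)
  have hm : ∀ i, N.row i ∈ W := fun i => Submodule.subset_span ⟨i, rfl⟩
  refine ⟨Matrix.of fun i j => e.repr ⟨N.row i, hm i⟩ j, V, ?_, ?_⟩
  · have : LinearIndependent K V.row :=
      e.linearIndependent.map' W.subtype (Submodule.ker_subtype W)
    simpa using this.rank_matrix
  · ext i k
    have h1 := e.sum_repr ⟨N.row i, hm i⟩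
    have h2 := congrFun (congrArg (Subtype.val) h1) k
    simp only [Matrix.mul_apply, Matrix.of_apply, V]
    rw [Submodule.coe_sum, Finset.sum_apply] at h2
    exact h2.symm

theorem extend_aux {K : Type*} [Field K] {a b : ℕ} (M N : Matrix (Fin a) (Fin b) K)
    (hM : M.rank = a) (hN : N.rank = a) :
    ∃ A : Matrix (Fin b) (Fin b) K, IsUnit A ∧ M * A = N := by
  have lM := li_rows_aux M hM
  have lN := li_rows_aux N hN
  obtain ⟨e, he⟩ := Submodule.exists_linearEquiv_restrict_eq
    ((Module.Basis.span lM).equiv (Module.Basis.span lN) (Equiv.refl _))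
  have he' : ∀ i, e (M.row i) = N.row i := by
    intro i
    have h := he (Module.Basis.span lM i)
    rw [Module.Basis.equiv_apply, Module.Basis.span_apply, Module.Basis.span_apply] at h
    exact h.symm
  refine ⟨Matrix.transpose (LinearMap.toMatrix' (e : (Fin b → K) →ₗ[K] (Fin b → K))), ?_, ?_⟩
  · rw [Matrix.isUnit_transpose, isUnit_iff_exists_inv]
    refine ⟨LinearMap.toMatrix' (e.symm : (Fin b → K) →ₗ[K] (Fin b → K)), ?_⟩
    rw [← LinearMap.toMatrix'_comp]
    simp
  · ext i k
    rw [Matrix.mul_apply_eq_vecMul, Matrix.vecMul_transpose, LinearMap.toMatrix'_mulVec]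
    exact congrFun (he' i) k

theorem equiv_symm_aux {K : Type*} [Field K] {n m : ℕ}
    {f g : Fin m → MvPolynomial (Fin n) K} (h : IsLinEquiv f g) : IsLinEquiv g f := by
  obtain ⟨A, hA, h⟩ := h
  obtain ⟨B, hB⟩ := isUnit_iff_exists.1 hA
  refine ⟨B, isUnit_iff_exists.2 ⟨A, hB.2, hB.1⟩, fun i => ?_⟩
  rw [h, sub_comp_aux, hB.1, sub_one_aux]

theorem essNum_set_aux {K : Type*} [Field K] {n m : ℕ}
    {f g : Fin m → MvPolynomial (Fin n) K} (h : IsLinEquiv f g) (s : ℕ)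
    (hs : ∃ (L : Matrix (Fin s) (Fin n) K) (ft : Fin m → MvPolynomial (Fin s) K),
    L.rank = s ∧ ∀ i, f i = aeval (fun j => ∑ k, C (L j k) * X k) (ft i)) :
    ∃ (L : Matrix (Fin s) (Fin n) K) (ft : Fin m → MvPolynomial (Fin s) K),
    L.rank = s ∧ ∀ i, g i = aeval (fun j => ∑ k, C (L j k) * X k) (ft i) := by
  obtain ⟨A, hA, h⟩ := h
  obtain ⟨L, ft, hL, hf⟩ := hs
  refine ⟨L * A, ft, ?_, fun i => ?_⟩
  · rw [Matrix.rank_mul_eq_left_of_isUnit_det _ _ ((Matrix.isUnit_iff_isUnit_det A).1 hA), hL]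
  · rw [h, hf, sub_comp_aux]

theorem essNum_eq_aux {K : Type*} [Field K] {n m : ℕ}
    {f g : Fin m → MvPolynomial (Fin n) K} (h : IsLinEquiv f g) : essNum f = essNum g := by
  unfold essNum
  congr 1
  ext s
  exact ⟨essNum_set_aux h s, essNum_set_aux (equiv_symm_aux h) s⟩

theorem isLinEquiv_essNum_eq_and_iff_reduced {K : Type*} [Field K]
    (hchar : ringChar K ≠ 2) {n m s : ℕ}
    (f g : Fin m → MvPolynomial (Fin n) K)
    (hfdeg : ∀ i, (f i).totalDegree ≤ 2) (hgdeg : ∀ i, (g i).totalDegree ≤ 2)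
    (hs : essNum f = s)
    (L L' : Matrix (Fin s) (Fin n) K)
    (ft gt : Fin m → MvPolynomial (Fin s) K)
    (hL : L.rank = s) (hL' : L'.rank = s)
    (hf : ∀ i, f i = aeval (fun j => ∑ k, C (L j k) * X k) (ft i))
    (hg : ∀ i, g i = aeval (fun j => ∑ k, C (L' j k) * X k) (gt i)) :
    (IsLinEquiv f g → essNum f = essNum g) ∧ (IsLinEquiv f g ↔ IsLinEquiv ft gt) := by
  refine ⟨essNum_eq_aux, ?_, ?_⟩
  · intro h
    have hgs : essNum g = s := (essNum_eq_aux h).symm.trans hs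
    obtain ⟨A, hA, h⟩ := h
    obtain ⟨R, hR⟩ := rinv_aux L' hL'
    have key : ∀ i, gt i = aeval (fun j => ∑ k, C ((L * A * R) j k) * X k) (ft i) := by
      intro i
      rw [← sub_comp_aux, ← sub_comp_aux, ← hf, ← h, hg, sub_comp_aux, hR, sub_one_aux]
    refine ⟨L * A * R, ?_, key⟩
    obtain ⟨U, V, hV, hUV⟩ := factor_aux (L * A * R * L')
    have hle : s ≤ (L * A * R * L').rank := by
      conv_lhs => rw [← hgs]
      apply Nat.sInf_le
      refine ⟨V, fun i => aeval (fun j => ∑ k, C (U j k) * X k) (ft i), hV, fun i => ?_⟩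
      rw [sub_comp_aux, ← hUV, hg, key, sub_comp_aux]
    have h2 : (L * A * R).rank = s :=
      le_antisymm (Matrix.rank_le_height _) (hle.trans (Matrix.rank_mul_le_left _ _))
    exact Matrix.linearIndependent_rows_iff_isUnit.1 (li_rows_aux _ h2)
  · rintro ⟨B, hB, h⟩
    have hr : (B * L').rank = s := by
      rw [Matrix.rank_mul_eq_right_of_isUnit_det _ _ ((Matrix.isUnit_iff_isUnit_det B).1 hB), hL']
    obtain ⟨A, hA, hLA⟩ := extend_aux L (B * L') hL hr
    refine ⟨A, hA, fun i => ?_⟩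
    rw [hf, sub_comp_aux, hLA, hg, h, sub_comp_aux]
end

section
/- Let K be a field with char K ≠ 2, let D in K^{n×n} be an invertible symmetric (e.g. diagonal) matrix, and let H_2,...,H_m and H'_2,...,H'_m be matrices in K^{n×n}. For any A in GL_n(K), the following are equivalent: (i) A^T·D·A = D and A^T·H_i·A = H'_i for all 2 ≤ i ≤ m; (ii) A^T·D·A = D and A^{-1}·(D^{-1}·H_i)·A = D^{-1}·H'_i for all 2 ≤ i ≤ m. In particular, simultaneous congruence of the families {D,H_2,...,H_m} and {D,H'_2,...,H'_m} by A is equivalent to A being D-orthogonal together with simultaneous conjugacy of the families {D^{-1}H_i} and {D^{-1}H'_i} by A. -/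
open Matrix

/-- Simultaneous congruence of the families `{D, H₂, …, H_m}` and `{D, H'₂, …, H'_m}`
by `A` is equivalent to `A` being `D`-orthogonal (`AᵀDA = D`) together with
simultaneous conjugacy of the families `{D⁻¹Hᵢ}` and `{D⁻¹H'ᵢ}` by `A`. -/
theorem congruence_iff_D_orthogonal_conjugacy {K : Type*} [Field K]
    (hchar : ringChar K ≠ 2) {n : ℕ} {ι : Type*}
    (D : Matrix (Fin n) (Fin n) K) (hD : IsUnit D) (hDsym : D.IsSymm)
    (H H' : ι → Matrix (Fin n) (Fin n) K)
    (A : Matrix (Fin n) (Fin n) K) (hA : IsUnit A) :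
    (Aᵀ * D * A = D ∧ ∀ i, Aᵀ * H i * A = H' i) ↔
    (Aᵀ * D * A = D ∧ ∀ i, A⁻¹ * (D⁻¹ * H i) * A = D⁻¹ * H' i) := by
  have hDd : IsUnit D.det := (Matrix.isUnit_iff_isUnit_det D).1 hD
  have hAd : IsUnit A.det := (Matrix.isUnit_iff_isUnit_det A).1 hA
  have hAt : IsUnit (Aᵀ).det := by rwa [Matrix.det_transpose]
  refine and_congr_right fun h => forall_congr' fun i => ?_
  have key : A⁻¹ * D⁻¹ = D⁻¹ * Aᵀ := by
    have h2 : D⁻¹ = A⁻¹ * (D⁻¹ * (Aᵀ)⁻¹) := by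
      conv_lhs => rw [← h]
      rw [Matrix.mul_inv_rev, Matrix.mul_inv_rev]
    conv_rhs => rw [h2]
    rw [Matrix.mul_assoc, Matrix.mul_assoc, Matrix.nonsing_inv_mul _ hAt, Matrix.mul_one]
  have e : A⁻¹ * (D⁻¹ * H i) * A = D⁻¹ * (Aᵀ * H i * A) := by
    rw [← Matrix.mul_assoc, key]
    simp only [Matrix.mul_assoc]
  rw [e]
  constructor
  · intro hi
    rw [hi]
  · intro hi
    have := congrArg (fun M => D * M) hi
    simpa only [Matrix.mul_nonsing_inv_cancel_left _ _ hDd] using this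
end

section
/- Let F be an algebraically closed field with char F ≠ 2 and let Z in F^{n×n} be an invertible matrix. Then there exists a polynomial q in F[X] such that the matrix W = q(Z) satisfies W^2 = Z. In other words, every invertible matrix over an algebraically closed field of characteristic different from 2 has a square root which is a polynomial in the matrix itself. -/
open Polynomial in
theorem aux_dvd {F : Type*} [Field F] (g : F[X]) (s : Multiset F)
    (h : ∀ a ∈ s, g.eval a = 0) :
    (s.map (fun a => X - C a)).prod ∣ g ^ (Multiset.card s) := by
  induction s using Multiset.induction with
  | empty => simp
  | cons a s ih =>
    rw [Multiset.map_cons, Multiset.prod_cons, Multiset.card_cons, pow_succ']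
    exact mul_dvd_mul (dvd_iff_isRoot.mpr (h a (Multiset.mem_cons_self a s)))
      (ih fun b hb => h b (Multiset.mem_cons_of_mem hb))

open Polynomial in
theorem aux_sqrt {F : Type*} [Field F] [IsAlgClosed F] (h2 : (2 : F) ≠ 0)
    (p : F[X]) (hp : p.Monic) (hp0 : p.eval 0 ≠ 0) : ∃ q : F[X], p ∣ q ^ 2 - X := by
  classical
  choose r hr using fun a : F => IsAlgClosed.exists_pow_nat_eq a (n := 2) (by norm_num)
  let q0 : F[X] := Lagrange.interpolate p.roots.toFinset id r
  have hq0 : ∀ a ∈ p.roots, (q0 ^ 2 - X).eval a = 0 := by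
    intro a ha
    have := Lagrange.eval_interpolate_at_node (s := p.roots.toFinset) (v := id) r
      (Set.injOn_id _) (i := a) (by simpa using ha)
    simp only [id] at this
    rw [eval_sub, eval_pow, eval_X, this, hr, sub_self]
  have hdvd := aux_dvd _ _ hq0
  have hspl := (IsAlgClosed.splits p).eq_prod_roots_of_monic hp
  rw [← hspl] at hdvd
  have hnil : IsNilpotent (AdjoinRoot.mk p q0 ^ 2 - AdjoinRoot.mk p X) :=
    ⟨_, by rw [← map_pow, ← map_sub, ← map_pow]; exact AdjoinRoot.mk_eq_zero.mpr hdvd⟩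
  have hz : IsUnit (AdjoinRoot.mk p X) := by
    obtain ⟨a, ha⟩ : X - C 0 ∣ p - C (p.eval 0) := dvd_iff_isRoot.mpr (by simp)
    have h1 : AdjoinRoot.mk p X * AdjoinRoot.mk p (a * C (-(p.eval 0)⁻¹)) = 1 := by
      rw [← map_mul, ← map_one (AdjoinRoot.mk p), AdjoinRoot.mk_eq_mk]
      refine ⟨C (-(p.eval 0)⁻¹), ?_⟩
      have h3 : C (p.eval 0) * C (-(p.eval 0)⁻¹) = -1 := by
        rw [← C_mul]; simp [hp0]
      rw [C_0, sub_zero] at ha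
      linear_combination (-C (-(p.eval 0)⁻¹)) * ha - h3
    exact IsUnit.of_mul_eq_one _ h1
  have hx : IsUnit (AdjoinRoot.mk p q0) := by
    have := hnil.isUnit_add_left_of_commute hz (Commute.all _ _)
    rw [add_sub_cancel] at this
    exact (isUnit_pow_iff two_ne_zero).mp this
  have h2' : IsUnit (2 : AdjoinRoot p) := by
    have := (IsUnit.mk0 _ h2).map (algebraMap F (AdjoinRoot p))
    rwa [map_ofNat] at this
  obtain ⟨w, ⟨-, hw⟩, -⟩ := existsUnique_nilpotent_sub_and_aeval_eq_zero
    (P := (X ^ 2 - C (AdjoinRoot.mk p X) : (AdjoinRoot p)[X])) (x := AdjoinRoot.mk p q0)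
    (by simpa using hnil) (by simpa [one_add_one_eq_two] using ⟨h2', hx⟩)
  obtain ⟨q, rfl⟩ := AdjoinRoot.mk_surjective w
  refine ⟨q, AdjoinRoot.mk_eq_zero.mp ?_⟩
  simpa using hw

/-- Every invertible matrix over an algebraically closed field of characteristic
different from 2 has a square root which is a polynomial in the matrix itself. -/
theorem exists_sqrt_polynomial_in_matrix {F : Type*} [Field F] [IsAlgClosed F]
    (hchar : ringChar F ≠ 2) {n : ℕ}
    (Z : Matrix (Fin n) (Fin n) F) (hZ : IsUnit Z) :
    ∃ q : Polynomial F, (Polynomial.aeval Z q) ^ 2 = Z := by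
  have hdet := ((Matrix.isUnit_iff_isUnit_det Z).mp hZ).ne_zero
  obtain ⟨q, a, ha⟩ := aux_sqrt (Ring.two_ne_zero hchar) Z.charpoly Z.charpoly_monic (by
    intro h
    rw [← Polynomial.coeff_zero_eq_eval_zero] at h
    exact hdet (by rw [Matrix.det_eq_sign_charpoly_coeff, h, mul_zero]))
  refine ⟨q, ?_⟩
  have := congrArg (Polynomial.aeval Z) ha
  simpa [Matrix.aeval_self_charpoly, sub_eq_zero] using this
end

section
/- Let F be an algebraically closed field with char F ≠ 2, let D in F^{n×n} be any invertible matrix, and let Z in F^{n×n} be an invertible matrix satisfying Z^T = D·Z·D^{-1}. Then there exists a matrix W in F^{n×n} such that W^2 = Z, W^T = D·W·D^{-1}, and W commutes with every matrix that commutes with Z (in particular W is a polynomial in Z). -/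
open Matrix

/-- If `Z` is invertible and lies in the Jordan algebra of an invertible matrix `D`
(i.e. `Zᵀ = D·Z·D⁻¹`), then over an algebraically closed field of characteristic ≠ 2
it has a square root `W` in the Jordan algebra of `D` which commutes with every
matrix commuting with `Z` (indeed, `W` is a polynomial in `Z`). -/
theorem exists_sqrt_in_jordan_algebra {F : Type*} [Field F] [IsAlgClosed F]
    (hchar : ringChar F ≠ 2) {n : ℕ}
    (D Z : Matrix (Fin n) (Fin n) F) (hD : IsUnit D) (hZ : IsUnit Z)
    (hZD : Zᵀ = D * Z * D⁻¹) :
    ∃ W : Matrix (Fin n) (Fin n) F, W ^ 2 = Z ∧ Wᵀ = D * W * D⁻¹ ∧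
      (∀ B : Matrix (Fin n) (Fin n) F, B * Z = Z * B → B * W = W * B) ∧
      ∃ q : Polynomial F, W = Polynomial.aeval Z q := by
  classical
  open Polynomial in
  have key : ∃ q : Polynomial F, (Polynomial.aeval Z q) ^ 2 = Z := by
    have h2 : (2 : F) ≠ 0 := Ring.two_ne_zero hchar
    choose s hs using fun a : F => IsAlgClosed.exists_pow_nat_eq a (n := 2) (by norm_num)
    set χ := Z.charpoly with hχ
    have hχ0 : χ ≠ 0 := Z.charpoly_monic.ne_zero
    set p : F[X] := Lagrange.interpolate χ.roots.toFinset id s with hp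
    have hpe : ∀ r, χ.IsRoot r → p.eval r = s r := by
      intro r hr
      have := Lagrange.eval_interpolate_at_node s (v := id) (s := χ.roots.toFinset)
        (i := r) (Set.injOn_id _) (by simpa [hχ0] using hr)
      exact this
    have hr0 : ∀ r, χ.IsRoot r → r ≠ 0 := by
      rintro r hr rfl
      have h := Z.det_eq_sign_charpoly_coeff
      rw [coeff_zero_eq_eval_zero, ← hχ, hr.eq_zero, mul_zero] at h
      exact ((Matrix.isUnit_iff_isUnit_det Z).1 hZ).ne_zero h
    have hdvd : χ ∣ (p ^ 2 - X) ^ (Multiset.card χ.roots) := by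
      have hsp := (IsAlgClosed.splits χ).eq_prod_roots_of_monic Z.charpoly_monic
      conv_lhs => rw [hsp]
      have h := Multiset.prod_dvd_prod_of_dvd (S := χ.roots) (fun a => X - C a)
        (fun _ => p ^ 2 - X) (by
          intro a ha
          rw [dvd_iff_isRoot, IsRoot.def]
          simp [hpe a (isRoot_of_mem_roots ha), hs])
      simpa using h
    have hcop : IsCoprime p χ := by
      rw [isCoprime_iff_aeval_ne_zero_of_isAlgClosed F F]
      intro a
      by_cases ha : χ.IsRoot a
      · left
        rw [coe_aeval_eq_eval, hpe a ha]
        intro h0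
        have := hs a
        rw [h0] at this
        exact hr0 a ha (by simpa using this.symm)
      · right
        rw [coe_aeval_eq_eval]
        exact ha
    set A := Algebra.adjoin F {Z}
    set z : A := ⟨Z, Algebra.self_mem_adjoin_singleton F Z⟩ with hz
    have hχz : aeval z χ = 0 := by
      rw [Subtype.ext_iff]; simpa [hz] using Z.aeval_self_charpoly
    have hnil : IsNilpotent (aeval (aeval z p) (X ^ 2 - C z : A[X])) := by
      refine ⟨Multiset.card χ.roots, ?_⟩
      obtain ⟨c, hc⟩ := hdvd
      have := congrArg (aeval z) hc
      simpa [hχz] using this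
    have hu : IsUnit (aeval (aeval z p) (derivative (X ^ 2 - C z : A[X]))) := by
      obtain ⟨a, b, hab⟩ := hcop
      have h := congrArg (aeval z) hab
      simp only [map_add, map_mul, hχz, mul_zero, add_zero, map_one] at h
      have h1 : IsUnit (aeval z p) := .of_mul_eq_one_right _ h
      have h3 : IsUnit (2 : A) := by
        have := (IsUnit.mk0 _ h2).map (algebraMap F A)
        rwa [map_ofNat] at this
      simpa [one_add_one_eq_two] using h3.mul h1
    obtain ⟨w, ⟨-, hw⟩, -⟩ := existsUnique_nilpotent_sub_and_aeval_eq_zero hnil hu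
    obtain ⟨q, hq⟩ := Algebra.adjoin_mem_exists_aeval F Z w.2
    refine ⟨q, ?_⟩
    rw [hq]
    have hw' : w ^ 2 = z := by simpa [sub_eq_zero] using hw
    exact congrArg Subtype.val hw'
  obtain ⟨q, hq⟩ := key
  have hDD : D⁻¹ * D = 1 := Matrix.nonsing_inv_mul D ((Matrix.isUnit_iff_isUnit_det D).1 hD)
  have hDD' : D * D⁻¹ = 1 := Matrix.mul_nonsing_inv D ((Matrix.isUnit_iff_isUnit_det D).1 hD)
  refine ⟨_, hq, ?_, ?_, q, rfl⟩
  · clear hq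
    induction q using Polynomial.induction_on' with
    | add a b ha hb => simp [ha, hb, mul_add, add_mul]
    | monomial k a =>
      have hk : (Z ^ k)ᵀ = D * Z ^ k * D⁻¹ := by
        induction k with
        | zero => simp [hDD']
        | succ k ih =>
          rw [pow_succ', Matrix.transpose_mul, ih, hZD, ← pow_succ', pow_succ]
          calc _ = D * Z ^ k * (D⁻¹ * D) * Z * D⁻¹ := by noncomm_ring
            _ = _ := by rw [hDD]; noncomm_ring
      rw [Polynomial.aeval_monomial, ← Algebra.smul_def, Matrix.transpose_smul, hk]
      simp
  · intro B hB
    have := Algebra.commute_of_mem_adjoin_singleton_of_commute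
      (Polynomial.aeval_mem_adjoin_singleton F Z (p := q)) (show Commute B Z from hB)
    exact this
end

section
/- Let K be a field with char K = 2, let ζ be an element of K, and let d ≥ 2. Then the Jordan block J_{ζ,d} has no square root: there is no matrix W in K^{d×d} with W^2 = J_{ζ,d}. -/
/-- The Jordan block of size `s` with eigenvalue `ζ`: `ζ` on the diagonal, `1` on the
superdiagonal, `0` elsewhere. -/
def jordanBlock {L : Type*} [Field L] (ζ : L) (s : ℕ) : Matrix (Fin s) (Fin s) L :=
  Matrix.of fun i j =>
    if (j : ℕ) = (i : ℕ) then ζ else if (j : ℕ) = (i : ℕ) + 1 then 1 else 0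

/-- Over a field of characteristic 2, a Jordan block of size at least 2 has no
square root. -/
theorem char_two_jordanBlock_no_sqrt {K : Type*} [Field K]
    (hchar : ringChar K = 2) (ζ : K) {d : ℕ} (hd : 2 ≤ d) :
    ¬ ∃ W : Matrix (Fin d) (Fin d) K, W ^ 2 = jordanBlock ζ d := by
  rintro ⟨W, hW⟩
  obtain ⟨n, rfl⟩ : ∃ n, d = n + 2 := ⟨d - 2, by omega⟩
  have h2 : (2 : K) = 0 := by
    have := ringChar.Nat.cast_ringChar (R := K)
    rw [hchar] at this
    exact_mod_cast this
  have hJ : ∀ i k : Fin (n+2), jordanBlock ζ (n+2) i k =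
      (if k = i then ζ else 0) + (if (k : ℕ) = (i : ℕ) + 1 then 1 else 0) := by
    intro i k
    simp only [jordanBlock, Matrix.of_apply, Fin.ext_iff]
    split_ifs <;> first | omega | simp
  have hc : W * jordanBlock ζ (n+2) = jordanBlock ζ (n+2) * W := by
    rw [← hW, pow_two, mul_assoc]
  have hL : ∀ (i : Fin (n+1)) (j : Fin (n+2)),
      (jordanBlock ζ (n+2) * W) i.castSucc j = ζ * W i.castSucc j + W i.succ j := by
    intro i j
    have h : ∀ k : Fin (n+2), ((k : ℕ) = (i.castSucc : ℕ) + 1) ↔ k = i.succ := by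
      intro k; simp [Fin.ext_iff]
    simp [Matrix.mul_apply, hJ, h, add_mul, Finset.sum_add_distrib, -Fin.val_castSucc]
  have hR0 : ∀ i, (W * jordanBlock ζ (n+2)) i 0 = W i 0 * ζ := by
    intro i
    simp [Matrix.mul_apply, hJ, mul_add, Finset.sum_add_distrib]
  have hR1 : ∀ i, (W * jordanBlock ζ (n+2)) i 1 = W i 1 * ζ + W i 0 := by
    intro i
    have h : ∀ k : Fin (n+2), (1 = (k : ℕ) + 1) ↔ k = 0 := by
      intro k; rw [Fin.ext_iff]; simp
    simp [Matrix.mul_apply, hJ, mul_add, Finset.sum_add_distrib, h]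
  have h0 : ∀ i : Fin (n+1), W i.succ 0 = 0 := by
    intro i
    have := hL i 0
    rw [← hc, hR0] at this
    linear_combination -this
  have h1 : ∀ i : Fin (n+1), W i.succ 1 = W i.castSucc 0 := by
    intro i
    have := hL i 1
    rw [← hc, hR1] at this
    linear_combination -this
  have h11 : W 1 1 = W 0 0 := h1 0
  have hk : ∀ k : Fin n, W k.succ.succ 1 = 0 := by
    intro k
    rw [h1, ← Fin.succ_castSucc, h0]
  have h := congrFun (congrFun hW 0) 1
  rw [pow_two, Matrix.mul_apply, Fin.sum_univ_succ, Fin.sum_univ_succ, hJ] at h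
  simp only [hk, mul_zero, Finset.sum_const_zero, Fin.succ_zero_eq_one, h11] at h
  simp at h
  have : (1 : K) = 0 := by
    rw [← h]; linear_combination (W 0 0 * W 0 1) * h2
  exact one_ne_zero this
end

section
/- Let K be a field with char K = 2, let ζ in K, let d ≥ 1, and let J = J_{ζ,d} be the Jordan block of size d with eigenvalue ζ. Then (J^2 − ζ^2·I)^⌈d/2⌉ = 0, and (J^2 − ζ^2·I)^e ≠ 0 for every integer e with 0 ≤ e < ⌈d/2⌉. Consequently ζ^2 is the only eigenvalue of J^2, its geometric multiplicity is 2 when d ≥ 2, and the Jordan normal form of J^2 consists of two Jordan blocks of sizes ⌈d/2⌉ and ⌊d/2⌋ when d ≥ 2. -/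
open Matrix

def shiftM (K : Type*) [Field K] (d k : ℕ) : Matrix (Fin d) (Fin d) K :=
  Matrix.of fun i j => if (j : ℕ) = (i : ℕ) + k then 1 else 0

theorem shiftM_mul (K : Type*) [Field K] (d k l : ℕ) :
    shiftM K d k * shiftM K d l = shiftM K d (k + l) := by
  ext i j
  simp only [shiftM, Matrix.mul_apply, Matrix.of_apply]
  by_cases h : (i : ℕ) + k < d
  · rw [Finset.sum_eq_single (⟨i + k, h⟩ : Fin d)]
    · simp [add_assoc]
    · intro b _ hb
      have : (b : ℕ) ≠ i + k := fun h' => hb (Fin.ext h')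
      simp [this]
    · simp
  · rw [Finset.sum_eq_zero]
    · have := j.2
      rw [if_neg (by omega)]
    · intro x _
      have := x.2
      rw [if_neg (by omega)]
      simp

theorem shiftM_zero (K : Type*) [Field K] (d : ℕ) : shiftM K d 0 = 1 := by
  ext i j
  simp [shiftM, Matrix.one_apply, Fin.ext_iff, eq_comm]

theorem shiftM_pow (K : Type*) [Field K] (d k e : ℕ) :
    shiftM K d k ^ e = shiftM K d (k * e) := by
  induction e with
  | zero => simp [shiftM_zero]
  | succ n ih => rw [pow_succ, ih, shiftM_mul, Nat.mul_succ]

theorem jordanBlock_eq {K : Type*} [Field K] (ζ : K) (d : ℕ) :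
    jordanBlock ζ d = ζ • (1 : Matrix (Fin d) (Fin d) K) + shiftM K d 1 := by
  ext i j
  simp only [jordanBlock, shiftM, Matrix.of_apply, Matrix.add_apply, Matrix.smul_apply,
    Matrix.one_apply, Fin.ext_iff, smul_eq_mul]
  split_ifs <;> first | omega | simp

theorem jordanBlock_sq {K : Type*} [Field K] (hchar : ringChar K = 2) (ζ : K) (d : ℕ) :
    jordanBlock ζ d ^ 2 = (ζ ^ 2) • (1 : Matrix (Fin d) (Fin d) K) + shiftM K d 2 := by
  have h2 : (2 : K) = 0 := by
    have := ringChar.Nat.cast_ringChar (R := K)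
    rw [hchar] at this
    exact_mod_cast this
  rw [jordanBlock_eq, sq, add_mul, mul_add, mul_add, shiftM_mul]
  simp only [Matrix.smul_mul, Matrix.mul_smul, Matrix.one_mul, Matrix.mul_one, smul_smul]
  have : ζ • shiftM K d 1 + ζ • shiftM K d 1 = 0 := by
    rw [← add_smul, ← two_mul, h2, zero_mul, zero_smul]
  rw [sq, add_assoc, ← add_assoc (ζ • shiftM K d 1), this, zero_add]

theorem shiftM_mulVec (K : Type*) [Field K] (d k : ℕ) (v : Fin d → K) (i : Fin d) :
    (shiftM K d k *ᵥ v) i = if h : (i : ℕ) + k < d then v ⟨i + k, h⟩ else 0 := by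
  simp only [shiftM, Matrix.mulVec, dotProduct, Matrix.of_apply]
  split_ifs with h
  · rw [Finset.sum_eq_single (⟨i + k, h⟩ : Fin d)]
    · simp
    · intro b _ hb
      have : (b : ℕ) ≠ i + k := fun h' => hb (Fin.ext h')
      simp [this]
    · simp
  · refine Finset.sum_eq_zero fun x _ => ?_
    have := x.2
    rw [if_neg (by omega)]
    simp

theorem mem_eig {K : Type*} [Field K] (hchar : ringChar K = 2) (ζ : K) (d : ℕ) (v : Fin d → K) :
    v ∈ Module.End.eigenspace (Matrix.toLin' (jordanBlock ζ d ^ 2)) (ζ ^ 2) ↔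
      ∀ i : Fin d, 2 ≤ (i : ℕ) → v i = 0 := by
  rw [Module.End.mem_eigenspace_iff, Matrix.toLin'_apply, jordanBlock_sq hchar, Matrix.add_mulVec,
    Matrix.smul_mulVec, Matrix.one_mulVec, add_eq_left]
  constructor
  · intro h i hi
    have := congrFun h ⟨i - 2, by omega⟩
    rw [shiftM_mulVec] at this
    have h3 : (i : ℕ) - 2 + 2 = i := by omega
    simpa [h3] using this
  · intro h
    ext i
    rw [shiftM_mulVec]
    split_ifs with h'
    · exact h _ (by simp)
    · rfl

theorem finrank_eig {K : Type*} [Field K] (hchar : ringChar K = 2) (ζ : K) (d : ℕ) (hd : 2 ≤ d) :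
    Module.finrank K
      (Module.End.eigenspace (Matrix.toLin' (jordanBlock ζ d ^ 2)) (ζ ^ 2)) = 2 := by
  let f : Module.End.eigenspace (Matrix.toLin' (jordanBlock ζ d ^ 2)) (ζ ^ 2) →ₗ[K] (Fin 2 → K) :=
    (LinearMap.funLeft K K (Fin.castLE hd)).comp (Submodule.subtype _)
  have hf : Function.Bijective f := by
    constructor
    · rw [← LinearMap.ker_eq_bot, LinearMap.ker_eq_bot']
      rintro ⟨v, hv⟩ h
      rw [mem_eig hchar] at hv
      ext i
      by_cases hi : 2 ≤ (i : ℕ)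
      · simpa using hv i hi
      · have := congrFun h ⟨i, by omega⟩
        simpa [f, LinearMap.funLeft] using this
    · intro w
      refine ⟨⟨fun i => if h : (i : ℕ) < 2 then w ⟨i, h⟩ else 0, ?_⟩, ?_⟩
      · rw [mem_eig hchar]
        intro i hi
        rw [dif_neg (by omega)]
      · ext i
        simp [f, LinearMap.funLeft]
        omega
  rw [(LinearEquiv.ofBijective f hf).finrank_eq]
  simp

def evenOdd (d : ℕ) : Fin ((d + 1) / 2) ⊕ Fin (d / 2) → Fin d :=
  Sum.elim (fun k => ⟨2 * k, by omega⟩) (fun k => ⟨2 * k + 1, by omega⟩)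

theorem evenOdd_bij (d : ℕ) : Function.Bijective (evenOdd d) := by
  constructor
  · rintro (a | a) (b | b) h <;> simp [evenOdd, Fin.ext_iff] at h ⊢ <;> omega
  · intro i
    rcases Nat.even_or_odd' (i : ℕ) with ⟨k, hk | hk⟩
    · exact ⟨Sum.inl ⟨k, by omega⟩, by simp [evenOdd, Fin.ext_iff, hk]⟩
    · exact ⟨Sum.inr ⟨k, by omega⟩, by simp [evenOdd, Fin.ext_iff, hk]⟩

theorem sub_evenOdd {K : Type*} [Field K] (hchar : ringChar K = 2) (ζ : K) (d : ℕ) :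
    (jordanBlock ζ d ^ 2).submatrix (evenOdd d) (evenOdd d) =
      Matrix.fromBlocks (jordanBlock (ζ ^ 2) ((d + 1) / 2)) 0 0
            (jordanBlock (ζ ^ 2) (d / 2)) := by
  rw [jordanBlock_sq hchar, jordanBlock_eq, jordanBlock_eq]
  ext (i | i) (j | j) <;>
  simp only [evenOdd, shiftM, Matrix.submatrix_apply, Matrix.of_apply, Matrix.add_apply,
    Matrix.smul_apply, Matrix.one_apply, Fin.ext_iff, smul_eq_mul, Sum.elim_inl, Sum.elim_inr,
    Matrix.fromBlocks_apply₁₁, Matrix.fromBlocks_apply₁₂, Matrix.fromBlocks_apply₂₁,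
    Matrix.fromBlocks_apply₂₂, Matrix.zero_apply] <;>
  split_ifs <;> first | omega | simp

theorem exists_T {K : Type*} [Field K] (hchar : ringChar K = 2) (ζ : K) (d : ℕ)
    (e e' : Fin ((d + 1) / 2) ⊕ Fin (d / 2) ≃ Fin d) (he : e = e') :
    ∃ T : Matrix (Fin d) (Fin d) K, IsUnit T ∧
      T⁻¹ * (jordanBlock ζ d ^ 2) * T =
        Matrix.reindex e e'
          (Matrix.fromBlocks (jordanBlock (ζ ^ 2) ((d + 1) / 2)) 0 0
            (jordanBlock (ζ ^ 2) (d / 2))) := by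
  subst he
  let σ : Fin d ≃ Fin d := e.symm.trans (Equiv.ofBijective _ (evenOdd_bij d))
  let T : Matrix (Fin d) (Fin d) K := (1 : Matrix (Fin d) (Fin d) K).submatrix id σ
  let S : Matrix (Fin d) (Fin d) K := (1 : Matrix (Fin d) (Fin d) K).submatrix σ id
  have hST : S * T = 1 := by
    ext i j
    simp [S, T, Matrix.mul_apply, Matrix.one_apply]
  have hinv : T⁻¹ = S := Matrix.inv_eq_left_inv hST
  refine ⟨T, IsUnit.of_mul_eq_one S (mul_eq_one_comm.mp hST), ?_⟩
  rw [hinv, ← sub_evenOdd hchar]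
  ext i j
  simp [S, T, Matrix.mul_apply, Matrix.one_apply, σ]

/-- In characteristic 2, for the Jordan block `J = J_{ζ,d}`:
`(J² − ζ²·I)^⌈d/2⌉ = 0` and `(J² − ζ²·I)^e ≠ 0` for `e < ⌈d/2⌉`; consequently `ζ²`
is the only eigenvalue of `J²`, its geometric multiplicity is `2` when `d ≥ 2`, and
the Jordan normal form of `J²` consists of two blocks of sizes `⌈d/2⌉` and `⌊d/2⌋`
when `d ≥ 2`. -/
theorem char_two_jordanBlock_sq {K : Type*} [Field K]
    (hchar : ringChar K = 2) (ζ : K) {d : ℕ} (hd : 1 ≤ d) :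
    (jordanBlock ζ d ^ 2 - (ζ ^ 2) • (1 : Matrix (Fin d) (Fin d) K)) ^ ((d + 1) / 2) = 0 ∧
    (∀ e : ℕ, e < (d + 1) / 2 →
      (jordanBlock ζ d ^ 2 - (ζ ^ 2) • (1 : Matrix (Fin d) (Fin d) K)) ^ e ≠ 0) ∧
    (∀ μ : K,
      Module.End.HasEigenvalue (Matrix.toLin' (jordanBlock ζ d ^ 2)) μ ↔ μ = ζ ^ 2) ∧
    (2 ≤ d →
      Module.finrank K
        (Module.End.eigenspace (Matrix.toLin' (jordanBlock ζ d ^ 2)) (ζ ^ 2)) = 2) ∧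
    (2 ≤ d → ∃ T : Matrix (Fin d) (Fin d) K, IsUnit T ∧
      T⁻¹ * (jordanBlock ζ d ^ 2) * T =
        Matrix.reindex (finSumFinEquiv.trans (finCongr (by omega)))
          (finSumFinEquiv.trans (finCongr (by omega)))
          (Matrix.fromBlocks (jordanBlock (ζ ^ 2) ((d + 1) / 2)) 0 0
            (jordanBlock (ζ ^ 2) (d / 2)))) := by
  have hN : jordanBlock ζ d ^ 2 - (ζ ^ 2) • (1 : Matrix (Fin d) (Fin d) K) = shiftM K d 2 := by
    rw [jordanBlock_sq hchar, add_sub_cancel_left]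
  have h1 : shiftM K d 2 ^ ((d + 1) / 2) = 0 := by
    rw [shiftM_pow]
    ext i j
    have := j.2
    simp only [shiftM, Matrix.of_apply, Matrix.zero_apply]
    rw [if_neg (by omega)]
  refine ⟨by rw [hN, h1], ?_, ?_, finrank_eig hchar ζ d, fun _ => exists_T hchar ζ d _ _ rfl⟩
  · intro e he h
    rw [hN, shiftM_pow] at h
    have := congrFun (congrFun h ⟨0, by omega⟩) ⟨2 * e, by omega⟩
    simp [shiftM] at this
  · intro μ
    constructor
    · intro h
      obtain ⟨v, hv⟩ := h.exists_hasEigenvector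
      have hv0 := hv.2
      have hv1 := hv.apply_eq_smul
      rw [Matrix.toLin'_apply] at hv1
      have h2 : shiftM K d 2 *ᵥ v = (μ - ζ ^ 2) • v := by
        rw [← hN, Matrix.sub_mulVec, hv1, Matrix.smul_mulVec, Matrix.one_mulVec, sub_smul]
      have h3 : ∀ n : ℕ, (shiftM K d 2 ^ n) *ᵥ v = (μ - ζ ^ 2) ^ n • v := by
        intro n
        induction n with
        | zero => simp
        | succ n ih =>
          rw [pow_succ, ← Matrix.mulVec_mulVec, h2, Matrix.mulVec_smul, ih, smul_smul,
            ← pow_succ']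
      have h4 := h3 ((d + 1) / 2)
      rw [h1, Matrix.zero_mulVec] at h4
      rcases smul_eq_zero.mp h4.symm with h5 | h5
      · exact sub_eq_zero.mp (eq_zero_of_pow_eq_zero h5)
      · exact absurd h5 hv0
    · rintro rfl
      refine Module.End.hasEigenvalue_of_hasEigenvector
        (x := Pi.single (⟨0, by omega⟩ : Fin d) (1 : K)) ⟨?_, ?_⟩
      · rw [mem_eig hchar]
        intro i hi
        rw [Pi.single_eq_of_ne]
        intro h
        rw [h] at hi
        simp at hi
      · simp
end

section
/- Let F be an algebraically closed field with char F = 2 and let Z in F^{n×n} be an invertible matrix. Then there exists a polynomial q in F[X] with (q(Z))^2 = Z if and only if Z is diagonalizable (i.e. there exists T in GL_n(F) such that T^{-1}·Z·T is diagonal). -/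
open Matrix

lemma aux_forward {F : Type*} [Field F] [IsAlgClosed F]
    (hchar : ringChar F = 2) {n : ℕ}
    (Z : Matrix (Fin n) (Fin n) F) (q : Polynomial F) (hq : (Polynomial.aeval Z q) ^ 2 = Z) :
    ∃ T : Matrix (Fin n) (Fin n) F, IsUnit T ∧ (T⁻¹ * Z * T).IsDiag := by
  have h2 : (2 : F) = 0 := by
    have := ringChar.Nat.cast_ringChar (R := F)
    rw [hchar] at this
    exact_mod_cast this
  have h2' : (2 : Polynomial F) = 0 := by
    rw [← Polynomial.C_ofNat, h2, Polynomial.C_0]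
  have hsep : (q ^ 2 - Polynomial.X).Separable := by
    refine ⟨0, -1, ?_⟩
    simp [Polynomial.derivative_pow, h2]
  have hann : Polynomial.aeval (Matrix.toLin' Z) (q ^ 2 - Polynomial.X) = 0 := by
    have h : Polynomial.aeval (Matrix.toLinAlgEquiv' Z) (q ^ 2 - Polynomial.X) = 0 := by
      rw [← AlgEquiv.coe_toAlgHom, Polynomial.aeval_algHom_apply]
      simp [hq]
    exact h
  have hss := Module.End.isSemisimple_of_squarefree_aeval_eq_zero hsep.squarefree hann
  have htop := Module.End.IsSemisimple.iSup_eigenspace_eq_top hss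
  let s : Set (Fin n → F) := ⋃ μ : F, (Module.End.eigenspace (Matrix.toLin' Z) μ : Set (Fin n → F))
  have hs : ⊤ ≤ Submodule.span F s := by
    rw [Submodule.span_iUnion]
    simp [htop]
  let b0 := Module.Basis.ofSpan hs
  have : Finite _ := Module.Finite.finite_basis b0
  have : Fintype _ := Fintype.ofFinite ((LinearIndepOn.extend (linearIndepOn_empty F id)
      (Set.empty_subset s)))
  let e := b0.indexEquiv (Pi.basisFun F (Fin n))
  let b := b0.reindex e
  have hb : ∀ i, ∃ μ : F, Z *ᵥ (b i) = μ • b i := by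
    intro i
    have h1 : b i ∈ s := by
      have : b i = b0 (e.symm i) := by simp [b]
      rw [this]
      exact Module.Basis.ofSpan_subset hs ⟨_, rfl⟩
    obtain ⟨μ, hμ⟩ := Set.mem_iUnion.1 h1
    refine ⟨μ, ?_⟩
    simpa using Module.End.mem_eigenspace_iff.1 hμ
  choose μ hμ using hb
  let T := (Pi.basisFun F (Fin n)).toMatrix b
  have hT : IsUnit T := by
    have := (Pi.basisFun F (Fin n)).invertibleToMatrix b
    exact isUnit_of_invertible T
  have hTa : ∀ i j, T i j = b j i := fun i j => by simp [T, Module.Basis.toMatrix_apply]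
  refine ⟨T, hT, ?_⟩
  have hZT : Z * T = T * diagonal μ := by
    ext i j
    have := congrFun (hμ j) i
    simp only [mul_diagonal, hTa]
    simp only [Matrix.mul_apply, hTa]
    simpa [mulVec, dotProduct, mul_comm] using this
  rw [mul_assoc, hZT, ← mul_assoc, nonsing_inv_mul _ ((isUnit_iff_isUnit_det T).1 hT), one_mul]
  exact isDiag_diagonal μ

lemma aux_backward {F : Type*} [Field F] [IsAlgClosed F] {n : ℕ}
    (Z T : Matrix (Fin n) (Fin n) F) (hT : IsUnit T) (hD : (T⁻¹ * Z * T).IsDiag) :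
    ∃ q : Polynomial F, (Polynomial.aeval Z q) ^ 2 = Z := by
  classical
  have hdet := (isUnit_iff_isUnit_det T).1 hT
  obtain ⟨d, hd⟩ : ∃ d, T⁻¹ * Z * T = diagonal d := ⟨_, hD.diagonal_diag.symm⟩
  have hs : ∀ x : F, ∃ y, y ^ 2 = x := fun x => IsAlgClosed.exists_pow_nat_eq x (by norm_num)
  choose r hr using hs
  let q := Lagrange.interpolate (Finset.univ.image d) id r
  have hq : ∀ i, q.eval (d i) = r (d i) := fun i =>
    Lagrange.eval_interpolate_at_node r (Set.injOn_id _) (Finset.mem_image_of_mem d (Finset.mem_univ i))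
  have hZ : Z * T = T * diagonal d := by
    rw [← hd, mul_assoc, ← mul_assoc, mul_nonsing_inv _ hdet, one_mul]
  have key : ∀ p : Polynomial F, Polynomial.aeval Z p * T = T * diagonal (fun i => p.eval (d i)) := by
    intro p
    induction p using Polynomial.induction_on' with
    | add p q hp hq =>
      simp only [map_add, add_mul, hp, hq, ← mul_add, diagonal_add, Polynomial.eval_add]
    | monomial k a =>
      have h : Z ^ k * T = T * diagonal d ^ k := by
        have : SemiconjBy T (diagonal d) Z := hZ.symm
        exact (this.pow_right k).symm
      rw [Polynomial.aeval_monomial, mul_assoc, h, diagonal_pow, ← Algebra.smul_def]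
      ext i j
      simp
      try ring
  refine ⟨q, ?_⟩
  rw [← map_pow]
  have h := key (q ^ 2)
  simp only [Polynomial.eval_pow, hq, hr] at h
  rw [← hZ] at h
  exact hT.mul_right_cancel h

/-- Over an algebraically closed field of characteristic 2, an invertible matrix has
a square root which is a polynomial in the matrix if and only if it is
diagonalizable. -/
theorem char_two_sqrt_poly_iff_diagonalizable {F : Type*} [Field F] [IsAlgClosed F]
    (hchar : ringChar F = 2) {n : ℕ}
    (Z : Matrix (Fin n) (Fin n) F) (hZ : IsUnit Z) :
    (∃ q : Polynomial F, (Polynomial.aeval Z q) ^ 2 = Z) ↔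
    (∃ T : Matrix (Fin n) (Fin n) F, IsUnit T ∧ (T⁻¹ * Z * T).IsDiag) := by
  constructor
  · rintro ⟨q, hq⟩
    exact aux_forward hchar Z q hq
  · rintro ⟨T, hT, hD⟩
    exact aux_backward Z T hT hD
end

section
/- Let K be a field, let P be a monic irreducible polynomial of degree d over K, and let Q be a monic polynomial of degree d over K such that P(X^2) = (−1)^d · Q(X) · Q(−X) in K[X]. Then the characteristic polynomial of C(Q)^2 equals P, and consequently C(Q)^2 is similar over K to the companion matrix C(P): there exists T in GL_d(K) with T^{-1}·C(Q)^2·T = C(P). -/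
open Polynomial Matrix

/-- The companion matrix of a (monic, degree `d`) polynomial `R`: `1` on the
subdiagonal, last column `(−r₀, …, −r_{d−1})ᵀ`, `0` elsewhere. -/
def companionMatrix {K : Type*} [Field K] (d : ℕ) (R : Polynomial K) :
    Matrix (Fin d) (Fin d) K :=
  Matrix.of fun i j =>
    if (i : ℕ) = (j : ℕ) + 1 then 1
    else if (j : ℕ) = d - 1 then -(R.coeff i) else 0

lemma comp_mulVec_single {K : Type*} [Field K] {d : ℕ} (R : Polynomial K) (j i : Fin d) :
    (companionMatrix d R *ᵥ Pi.single j 1) i = companionMatrix d R i j := by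
  simp

lemma comp_pow_single {K : Type*} [Field K] {d : ℕ} (hd : 0 < d) (R : Polynomial K) (j : ℕ)
    (hj : j < d) :
    (companionMatrix d R) ^ j *ᵥ Pi.single (⟨0, hd⟩ : Fin d) 1 = Pi.single (⟨j, hj⟩ : Fin d) 1 := by
  induction j with
  | zero => rw [pow_zero, Matrix.one_mulVec]
  | succ k ih =>
    rw [pow_succ', ← Matrix.mulVec_mulVec, ih (by omega)]
    ext i
    rw [comp_mulVec_single]
    have h1 : ¬ (k = d - 1) := by omega
    simp [companionMatrix, h1, Pi.single_apply, Fin.ext_iff]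

lemma aeval_mulVec {K : Type*} [Field K] {d n : ℕ} (M : Matrix (Fin d) (Fin d) K)
    (R : Polynomial K) (hn : R.natDegree < n) (v : Fin d → K) :
    aeval M R *ᵥ v = ∑ i : Fin n, R.coeff i • (M ^ (i : ℕ) *ᵥ v) := by
  rw [aeval_eq_sum_range' hn, Matrix.sum_mulVec, Finset.sum_range]
  simp [Matrix.smul_mulVec]

lemma aeval_mulVec_monic {K : Type*} [Field K] {d n : ℕ} (M : Matrix (Fin d) (Fin d) K)
    (R : Polynomial K) (hR : R.Monic) (hn : R.natDegree = n) (v : Fin d → K) :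
    aeval M R *ᵥ v = ∑ i : Fin n, R.coeff i • (M ^ (i : ℕ) *ᵥ v) + M ^ n *ᵥ v := by
  rw [aeval_mulVec M R (n := n + 1) (by omega), Fin.sum_univ_castSucc]
  have : R.coeff n = 1 := by rw [← hn]; exact hR
  simp [this]

lemma aeval_companion {K : Type*} [Field K] {d : ℕ} (hd : 0 < d) (R : Polynomial K)
    (hR : R.Monic) (hn : R.natDegree = d) : aeval (companionMatrix d R) R = 0 := by
  set A := companionMatrix d R with hA
  have h0 : aeval A R *ᵥ Pi.single (⟨0, hd⟩ : Fin d) 1 = 0 := by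
    rw [aeval_mulVec_monic A R hR hn]
    have e : A ^ d = A * A ^ (d - 1) := by rw [← pow_succ']; congr 1; omega
    rw [e, ← Matrix.mulVec_mulVec, hA, comp_pow_single hd R (d-1) (by omega)]
    ext i
    rw [Pi.add_apply, comp_mulVec_single]
    have hi : (i : ℕ) ≠ d - 1 + 1 := by omega
    have hs : ∀ c : Fin d, companionMatrix d R ^ (c : ℕ) *ᵥ Pi.single (⟨0, hd⟩ : Fin d) 1 =
        Pi.single c 1 := fun c => comp_pow_single hd R c c.2
    simp only [hs]
    simp [companionMatrix, hi, Finset.sum_apply, Pi.single_apply]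
  have h1 : ∀ j : Fin d, aeval A R *ᵥ Pi.single j 1 = 0 := by
    intro j
    have hc : aeval A R * A ^ (j : ℕ) = A ^ (j : ℕ) * aeval A R := by
      have := congrArg (aeval A) (mul_comm R (X ^ (j : ℕ)))
      simpa using this
    have := comp_pow_single hd R j j.2
    rw [← hA] at this
    rw [show j = ⟨(j : ℕ), j.2⟩ from rfl, ← this, Matrix.mulVec_mulVec, hc,
      ← Matrix.mulVec_mulVec, h0, Matrix.mulVec_zero]
  ext i j
  have := congrFun (h1 j) i
  simpa using this

lemma krylov_mul {K : Type*} [Field K] {d : ℕ} (M : Matrix (Fin d) (Fin d) K)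
    (R : Polynomial K) (hR : R.Monic) (hn : R.natDegree = d) (v : Fin d → K)
    (h : aeval M R *ᵥ v = 0) :
    M * Matrix.of (fun i (j : Fin d) => (M ^ (j : ℕ) *ᵥ v) i) =
      Matrix.of (fun i (j : Fin d) => (M ^ (j : ℕ) *ᵥ v) i) * companionMatrix d R := by
  ext i j
  have hL : (M * Matrix.of (fun i (j : Fin d) => (M ^ (j : ℕ) *ᵥ v) i)) i j =
      (M ^ ((j : ℕ) + 1) *ᵥ v) i := by
    rw [pow_succ', ← Matrix.mulVec_mulVec]; rfl
  rw [hL, Matrix.mul_apply]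
  simp only [Matrix.of_apply, companionMatrix]
  by_cases hj : (j : ℕ) = d - 1
  · have hne : ∀ k : Fin d, (k : ℕ) ≠ (j : ℕ) + 1 := fun k => by have := k.2; omega
    have e : (j : ℕ) + 1 = d := by have := j.2; omega
    rw [aeval_mulVec_monic M R hR hn] at h
    have := congrFun h i
    simp only [Pi.add_apply, Finset.sum_apply, Pi.smul_apply, smul_eq_mul, Pi.zero_apply] at this
    simp only [hne, if_false, if_pos hj, mul_neg, Finset.sum_neg_distrib]
    rw [e, eq_neg_of_add_eq_zero_right this]
    simp only [mul_comm]
  · have hlt : (j : ℕ) + 1 < d := by have := j.2; omega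
    rw [Finset.sum_eq_single (⟨(j : ℕ) + 1, hlt⟩ : Fin d)]
    · simp
    · intro b _ hb
      have : (b : ℕ) ≠ (j : ℕ) + 1 := fun h => hb (Fin.ext h)
      simp [this, hj]
    · simp

lemma krylov_unit {K : Type*} [Field K] {d : ℕ} (M : Matrix (Fin d) (Fin d) K)
    (R : Polynomial K) (hirr : Irreducible R) (hn : R.natDegree = d) (v : Fin d → K)
    (hv : v ≠ 0) (h : aeval M R *ᵥ v = 0) :
    IsUnit (Matrix.of (fun i (j : Fin d) => (M ^ (j : ℕ) *ᵥ v) i)) := by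
  rw [← Matrix.linearIndependent_cols_iff_isUnit, Fintype.linearIndependent_iff]
  intro g hg
  set f : K[X] := ∑ j : Fin d, C (g j) * X ^ (j : ℕ) with hf
  have hcoeff : ∀ j : Fin d, f.coeff j = g j := by
    intro j
    simp [hf, Polynomial.coeff_X_pow, ← Fin.ext_iff]
  have hfv : aeval M f *ᵥ v = 0 := by
    rw [← hg]
    ext i
    simp [hf, Matrix.sum_mulVec, Finset.sum_apply, Matrix.col, ← Matrix.mulVec_mulVec,
      Matrix.algebraMap_eq_diagonal, Matrix.mulVec_diagonal]
  have hdeg : f.degree < d := by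
    rw [hf]
    exact Polynomial.degree_sum_fin_lt g
  have hf0 : f = 0 := by
    by_contra hne
    have hnd : ¬ R ∣ f := fun hd => by
      have := Polynomial.degree_le_of_dvd hd hne
      rw [Polynomial.degree_eq_natDegree hirr.ne_zero, hn] at this
      exact absurd hdeg (not_lt.mpr this)
    obtain ⟨a, b, hab⟩ := (hirr.coprime_iff_not_dvd).mpr hnd
    have := congrArg (fun p => aeval M p *ᵥ v) hab
    simp only [map_add, map_mul, map_one, Matrix.add_mulVec, Matrix.one_mulVec,
      ← Matrix.mulVec_mulVec, h, hfv, Matrix.mulVec_zero, add_zero] at this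
    exact hv this.symm
  intro j
  rw [← hcoeff, hf0, Polynomial.coeff_zero]

/-- If `P` is monic irreducible of degree `d`, `Q` monic of degree `d`, and
`P(X²) = (−1)^d·Q(X)·Q(−X)`, then the characteristic polynomial of `C(Q)²` is `P`,
and consequently `C(Q)²` is similar over `K` to the companion matrix `C(P)`. -/
theorem companion_sq_similar_companion {K : Type*} [Field K] {d : ℕ} (hd : 0 < d)
    (P Q : Polynomial K) (hP : P.Monic) (hPirr : Irreducible P)
    (hPdeg : P.natDegree = d) (hQ : Q.Monic) (hQdeg : Q.natDegree = d)
    (hPQ : P.comp (Polynomial.X ^ 2) =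
      (-1 : Polynomial K) ^ d * (Q * Q.comp (-Polynomial.X))) :
    ((companionMatrix d Q) ^ 2).charpoly = P ∧
    ∃ T : Matrix (Fin d) (Fin d) K, IsUnit T ∧
      T⁻¹ * (companionMatrix d Q) ^ 2 * T = companionMatrix d P := by
  set A := companionMatrix d Q with hA
  have hQA : aeval A Q = 0 := aeval_companion hd Q hQ hQdeg
  have hPA : aeval (A ^ 2) P = 0 := by
    have h := congrArg (aeval A) hPQ
    rw [Polynomial.aeval_comp] at h
    simpa [hQA] using h
  have : Nonempty (Fin d) := ⟨⟨0, hd⟩⟩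
  constructor
  · have hmin : P = minpoly K (A ^ 2) := minpoly.eq_of_irreducible_of_monic hPirr hPA hP
    have hdvd : P ∣ (A ^ 2).charpoly := hmin ▸ Matrix.minpoly_dvd_charpoly (A ^ 2)
    refine Polynomial.eq_of_monic_of_dvd_of_natDegree_le hP (Matrix.charpoly_monic _) hdvd ?_
    rw [Matrix.charpoly_natDegree_eq_dim, hPdeg, Fintype.card_fin]
  · have hv : (Pi.single (⟨0, hd⟩ : Fin d) 1 : Fin d → K) ≠ 0 := by simp
    have h0 : aeval (A ^ 2) P *ᵥ (Pi.single (⟨0, hd⟩ : Fin d) 1 : Fin d → K) = 0 := by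
      rw [hPA, Matrix.zero_mulVec]
    have hu := krylov_unit (A ^ 2) P hPirr hPdeg _ hv h0
    refine ⟨_, hu, ?_⟩
    rw [mul_assoc, krylov_mul (A ^ 2) P hP hPdeg _ h0, ← mul_assoc,
      Matrix.nonsing_inv_mul _ ((Matrix.isUnit_iff_isUnit_det _).mp hu), one_mul]
end
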